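/- Let S = (G, 9, k, τ) be a realizable graph story where G is a nested triangles graph on n = 3h vertices (h ≥ 3) and τ is given by the indices of the vertices of G. Then any realization of S requires k ∈ Ω(n) extra points. -/

import Mathlib

open Set

namespace GraphStories

/-- Points of the plane. -/
abbrev Pt : Type := ℝ × ℝ

/-- The vertex set of the window graph `G_i` (time `i` is 1-indexed, vertex
`v_j : Fin n` sits at position `j+1` in the ordering `τ`):
`v_j ∈ G_i` iff `max{1, i-ω+1} ≤ j+1 ≤ i`. -/
def window (n ω i : ℕ) : Set (Fin n) := {j | j.val + 1 ≤ i ∧ i ≤ j.val + ω}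

/-- All edges of `G` are visible: `|i - j| < ω` for every edge `(v_i, v_j)`. -/
def Visible (n ω : ℕ) (G : SimpleGraph (Fin n)) : Prop :=
  ∀ u v : Fin n, G.Adj u v → u.val < v.val + ω ∧ v.val < u.val + ω

/-- The data of a drawing: a position for every vertex, and a parametrized curve
for every (ordered) pair of vertices (only the data attached to the vertices and
edges of the relevant subgraph is meaningful). -/
structure RawDrawing (n : ℕ) where
  pos : Fin n → Pt
  curve : Fin n → Fin n → ℝ → Pt

/-- `γ` (restricted to `[0,1]`) is a Jordan arc from `a` to `b`. -/
def IsArcFrom (γ : ℝ → Pt) (a b : Pt) : Prop :=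
  ContinuousOn γ (Icc 0 1) ∧ InjOn γ (Icc 0 1) ∧ γ 0 = a ∧ γ 1 = b

/-- The set of points of an arc. -/
def arcBody (γ : ℝ → Pt) : Set Pt := γ '' Icc (0 : ℝ) 1

/-- The set of interior points of an arc (endpoints removed). -/
def arcInterior (γ : ℝ → Pt) : Set Pt := γ '' Ioo (0 : ℝ) 1

/-- `D` is a planar drawing of the subgraph of `G` induced by `S`, with the
vertices mapped to (distinct) points of `P` and the edges drawn as Jordan arcs
which pairwise do not intersect except at common endpoints. -/
structure IsPlanarDrawingOn (n : ℕ) (G : SimpleGraph (Fin n)) (S : Set (Fin n))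
    (P : Set Pt) (D : RawDrawing n) : Prop where
  pos_mem : ∀ v ∈ S, D.pos v ∈ P
  pos_inj : InjOn D.pos S
  curve_symm : ∀ u v : Fin n, D.curve v u = fun t => D.curve u v (1 - t)
  arc : ∀ u ∈ S, ∀ v ∈ S, G.Adj u v → IsArcFrom (D.curve u v) (D.pos u) (D.pos v)
  vertex_off_arc : ∀ u ∈ S, ∀ v ∈ S, G.Adj u v → ∀ w ∈ S,
      D.pos w ∉ arcInterior (D.curve u v)
  no_cross : ∀ u ∈ S, ∀ v ∈ S, ∀ x ∈ S, ∀ y ∈ S, G.Adj u v → G.Adj x y →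
      s(u, v) ≠ s(x, y) →
      arcInterior (D.curve u v) ∩ arcInterior (D.curve x y) = ∅

/-- `D` is a planar drawing of the subgraph of `G` induced by `S` (anywhere in
the plane). -/
def IsPlanarDrawing (n : ℕ) (G : SimpleGraph (Fin n)) (S : Set (Fin n))
    (D : RawDrawing n) : Prop :=
  IsPlanarDrawingOn n G S univ D

/-- A realization of the graph story `(G, ω, k, τ)` on the point set `P`:
a sequence `Γ_1, …, Γ_n` of planar drawings of the window graphs `G_1, …, G_n`
on `P` (property R1) such that consecutive drawings restrict identically
(vertex positions and edge arcs) to the common subgraph `G_{i-1} ∩ G_i`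
(property R2). -/
structure Realization (n ω : ℕ) (G : SimpleGraph (Fin n)) (P : Set Pt) where
  Γ : ℕ → RawDrawing n
  planar : ∀ i, 1 ≤ i → i ≤ n → IsPlanarDrawingOn n G (window n ω i) P (Γ i)
  pos_eq : ∀ i, 2 ≤ i → i ≤ n → ∀ v ∈ window n ω (i - 1) ∩ window n ω i,
      (Γ i).pos v = (Γ (i - 1)).pos v
  curve_eq : ∀ i, 2 ≤ i → i ≤ n →
      ∀ u ∈ window n ω (i - 1) ∩ window n ω i,
      ∀ v ∈ window n ω (i - 1) ∩ window n ω i,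
      G.Adj u v → (Γ i).curve u v = (Γ (i - 1)).curve u v

/-- The story `(G, ω, k, τ)` admits a realization on the point set `P`. -/
def RealizableOn (n ω : ℕ) (G : SimpleGraph (Fin n)) (P : Set Pt) : Prop :=
  Nonempty (Realization n ω G P)

/-- The story `(G, ω, k, τ)` is realizable: it admits a realization on some set
of `ω + k` points. -/
def Realizable (n ω k : ℕ) (G : SimpleGraph (Fin n)) : Prop :=
  ∃ P : Finset Pt, P.card = ω + k ∧ RealizableOn n ω G ↑P

/-- The `n`-vertex nested triangles graph (`n = 3h`): it contains the vertices
and edges of the triangles `(v_{3m}, v_{3m+1}, v_{3m+2})` (vertices with equal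
`⌊·/3⌋`), plus the edges `(v_i, v_{i+3})`. -/
def nestedTriangles (h : ℕ) : SimpleGraph (Fin (3 * h)) :=
  SimpleGraph.fromRel fun a b => a.val / 3 = b.val / 3 ∨ a.val + 3 = b.val

open unitInterval in
/-- every nonvanishing continuous function on a simply connected space has a logarithm -/
theorem exists_log {A : Type*} [TopologicalSpace A] [SimplyConnectedSpace A]
    [LocallyPathConnectedSpace A] (f : A → ℂ) (hf : Continuous f) (h0 : ∀ a, f a ≠ 0) :
    ∃ L : A → ℂ, Continuous L ∧ ∀ a, Complex.exp (L a) = f a := by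
  obtain ⟨a₀⟩ : Nonempty A := inferInstance
  obtain ⟨F, ⟨-, hF⟩, -⟩ := Complex.isCoveringMapOn_exp.existsUnique_continuousMap_lifts
    (⟨f, hf⟩ : C(A, ℂ)) (a₀ := a₀) (e₀ := Complex.log (f a₀)) (Complex.exp_log (h0 a₀))
    (fun a => by simpa using h0 a)
  exact ⟨F, F.continuous, fun a => congrFun hF a⟩

open unitInterval in
theorem log_unique (L L' : I → ℂ) (hL : Continuous L) (hL' : Continuous L')
    (h : ∀ t, Complex.exp (L t) = Complex.exp (L' t)) : L 1 - L 0 = L' 1 - L' 0 := by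
  have key : (fun t => L t) = fun t => L' t + (L 0 - L' 0) := by
    have := Complex.isCoveringMap_exp.eq_of_comp_eq (g₁ := fun t => L t)
      (g₂ := fun t => L' t + (L 0 - L' 0)) hL (by fun_prop) (by
        funext t
        apply Subtype.ext
        simp only [Function.comp]
        rw [Complex.exp_add, Complex.exp_sub, h t, h 0]
        field_simp) 0 (by ring)
    exact this
  have := congrFun key 1
  rw [this]; ring

section
open unitInterval Classical

/-- variation of the logarithm of `γ - p` along the path `γ` -/
noncomputable def lvar {a b : ℂ} (γ : Path a b) (p : ℂ) : ℂ :=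
  if h : ∃ L : I → ℂ, Continuous L ∧ ∀ t, Complex.exp (L t) = γ t - p then
    h.choose 1 - h.choose 0 else 0

theorem lvar_eq {a b : ℂ} (γ : Path a b) (p : ℂ) (L : I → ℂ) (hL : Continuous L)
    (h : ∀ t, Complex.exp (L t) = γ t - p) : lvar γ p = L 1 - L 0 := by
  have hex : ∃ L : I → ℂ, Continuous L ∧ ∀ t, Complex.exp (L t) = γ t - p := ⟨L, hL, h⟩
  unfold lvar
  rw [dif_pos hex]
  exact log_unique _ _ hex.choose_spec.1 hL (fun t => by rw [hex.choose_spec.2, h])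

theorem lvar_box {a b c d : ℂ} (γ : Path a b) (δ : Path c d)
    (h : Disjoint (range γ) (range δ)) :
    lvar γ c + lvar δ b = lvar δ a + lvar γ d := by
  have hne : ∀ s t, γ s ≠ δ t := fun s t e =>
    (Set.disjoint_left.1 h) ⟨s, rfl⟩ ⟨t, e.symm⟩
  obtain ⟨G, hG, hGe⟩ := exists_log (A := ℝ × ℝ) (fun x => γ.extend x.1 - δ.extend x.2)
    (by fun_prop) (fun x => sub_ne_zero.2 (hne _ _))
  have e1 : lvar γ c = G (1, 0) - G (0, 0) := by
    apply lvar_eq γ c (fun t : I => G ((t : ℝ), 0)) (by fun_prop)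
    intro t; rw [hGe]; simp
  have e2 : lvar γ d = G (1, 1) - G (0, 1) := by
    apply lvar_eq γ d (fun t : I => G ((t : ℝ), 1)) (by fun_prop)
    intro t; rw [hGe]; simp
  have e3 : lvar δ b = G (1, 1) - G (1, 0) := by
    rw [lvar_eq δ b (fun t : I => G (1, (t : ℝ)) + Real.pi * Complex.I) (by fun_prop)]
    · simp
    intro t; rw [Complex.exp_add, hGe]; simp
  have e4 : lvar δ a = G (0, 1) - G (0, 0) := by
    rw [lvar_eq δ a (fun t : I => G (0, (t : ℝ)) + Real.pi * Complex.I) (by fun_prop)]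
    · simp
    intro t; rw [Complex.exp_add, hGe]; simp
  rw [e1, e2, e3, e4]; ring

theorem exp_lvar {a b : ℂ} (γ : Path a b) (p : ℂ) (h : p ∉ range γ) :
    Complex.exp (lvar γ p) = (b - p) / (a - p) := by
  obtain ⟨G, hG, hGe⟩ := exists_log (A := ℝ) (fun x => γ.extend x - p)
    (by fun_prop) (fun x => sub_ne_zero.2 (fun e => h ⟨_, e⟩))
  rw [lvar_eq γ p (fun t : I => G t) (by fun_prop) (by intro t; rw [hGe]; simp)]
  rw [Complex.exp_sub, hGe, hGe]; simp

theorem core {a b x0 x1 x2 : ℂ} (s0 : Path a x0) (s1 : Path a x1) (s2 : Path a x2)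
    (t0 : Path x0 b) (t1 : Path x1 b) (t2 : Path x2 b)
    (e0 : Path x1 x2) (e1 : Path x2 x0) (e2 : Path x0 x1)
    (s0t1 : Disjoint (range s0) (range t1)) (s0t2 : Disjoint (range s0) (range t2))
    (s1t0 : Disjoint (range s1) (range t0)) (s1t2 : Disjoint (range s1) (range t2))
    (s2t0 : Disjoint (range s2) (range t0)) (s2t1 : Disjoint (range s2) (range t1))
    (s0e0 : Disjoint (range s0) (range e0)) (s1e1 : Disjoint (range s1) (range e1))
    (s2e2 : Disjoint (range s2) (range e2)) (t0e0 : Disjoint (range t0) (range e0))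
    (t1e1 : Disjoint (range t1) (range e1)) (t2e2 : Disjoint (range t2) (range e2)) :
    ¬ JoinedIn (range e0 ∪ range e1 ∪ range e2)ᶜ a b := by
  rintro ⟨p, hp⟩
  have pd : ∀ {c d : ℂ} (e : Path c d), range e ⊆ range e0 ∪ range e1 ∪ range e2 →
      Disjoint (range e) (range p) := by
    intro c d e he
    rw [Set.disjoint_left]
    rintro z hz ⟨t, rfl⟩
    exact hp t (he hz)
  have w0 := lvar_box e0 p (pd e0 (fun z hz => Or.inl (Or.inl hz)))
  have w1 := lvar_box e1 p (pd e1 (fun z hz => Or.inl (Or.inr hz)))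
  have w2 := lvar_box e2 p (pd e2 (fun z hz => Or.inr hz))
  have A01 := lvar_box s0 t1 s0t1
  have A02 := lvar_box s0 t2 s0t2
  have A10 := lvar_box s1 t0 s1t0
  have A12 := lvar_box s1 t2 s1t2
  have A20 := lvar_box s2 t0 s2t0
  have A21 := lvar_box s2 t1 s2t1
  have B0 := lvar_box s0 e0 s0e0
  have B1 := lvar_box s1 e1 s1e1
  have B2 := lvar_box s2 e2 s2e2
  have C0 := lvar_box t0 e0 t0e0
  have C1 := lvar_box t1 e1 t1e1
  have C2 := lvar_box t2 e2 t2e2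
  set S := (lvar t0 a + lvar s0 b - lvar s0 x1 - lvar t0 x1)
    + (lvar t1 a + lvar s1 b - lvar s1 x2 - lvar t1 x2)
    + (lvar t2 a + lvar s2 b - lvar s2 x0 - lvar t2 x0) with hS
  have hS0 : S = 0 := by
    rw [hS]
    linear_combination (-1 / 2) * (w0 + w1 + w2 + A01 + A02 + A10 + A12 + A20 + A21
      + B0 + B1 + B2 + C0 + C1 + C2)
  have nm : ∀ {c d c' d' u : ℂ} {e : Path c d} {f : Path c' d'},
    Disjoint (range e) (range f) → u ∈ range f → u ∉ range e := fun h hu hu' => 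
      (Set.disjoint_left.1 h) hu' hu
  have E : Complex.exp S = -1 := by
    have ne : ∀ {c d c' d' u v : ℂ} {e : Path c d} {f : Path c' d'},
      Disjoint (range e) (range f) → v ∈ range e → u ∈ range f → v - u ≠ 0 := by
        intro c d c' d' u v e f h hv hu h'
        rw [sub_eq_zero] at h'
        subst h'
        exact nm h hu hv
    have n1 := ne s0t1 s0.source_mem_range t1.target_mem_range
    have n2 := ne s0t1 s0.source_mem_range t1.source_mem_range
    have n3 := ne s1t2 s1.source_mem_range t2.source_mem_range
    have n4 := ne s1t0 s1.source_mem_range t0.source_mem_range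
    have n5 := ne s0t1 s0.target_mem_range t1.target_mem_range
    have n6 := ne s1t2 s1.target_mem_range t2.target_mem_range
    have n7 := ne s2t1 s2.target_mem_range t1.target_mem_range
    have m1 : b - a ≠ 0 := by rw [← neg_sub]; exact neg_ne_zero.2 n1
    have m2 : x1 - a ≠ 0 := by rw [← neg_sub]; exact neg_ne_zero.2 n2
    have m3 : x2 - a ≠ 0 := by rw [← neg_sub]; exact neg_ne_zero.2 n3
    have m4 : x0 - a ≠ 0 := by rw [← neg_sub]; exact neg_ne_zero.2 n4
    have m5 : b - x0 ≠ 0 := by rw [← neg_sub]; exact neg_ne_zero.2 n5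
    have m6 : b - x1 ≠ 0 := by rw [← neg_sub]; exact neg_ne_zero.2 n6
    have m7 : b - x2 ≠ 0 := by rw [← neg_sub]; exact neg_ne_zero.2 n7
    have k1 := ne s0t1 s0.target_mem_range t1.source_mem_range
    have k2 := ne s1t2 s1.target_mem_range t2.source_mem_range
    have k3 := ne s2t0 s2.target_mem_range t0.source_mem_range
    rw [hS]
    simp only [Complex.exp_add, Complex.exp_sub]
    rw [exp_lvar t0 a (nm s1t0.symm s1.source_mem_range), 
      exp_lvar t1 a (nm s0t1.symm s0.source_mem_range),
      exp_lvar t2 a (nm s0t2.symm s0.source_mem_range),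
      exp_lvar s0 b (nm s0t1 t1.target_mem_range),
      exp_lvar s1 b (nm s1t0 t0.target_mem_range),
      exp_lvar s2 b (nm s2t0 t0.target_mem_range),
      exp_lvar s0 x1 (nm s0t1 t1.source_mem_range),
      exp_lvar t0 x1 (nm s1t0.symm s1.target_mem_range),
      exp_lvar s1 x2 (nm s1t2 t2.source_mem_range),
      exp_lvar t1 x2 (nm s2t1.symm s2.target_mem_range),
      exp_lvar s2 x0 (nm s2t0 t0.source_mem_range),
      exp_lvar t2 x0 (nm s0t2.symm s0.target_mem_range)]
    have q1 : b - a = -(a - b) := by ring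
    have q2 : x0 - a = -(a - x0) := by ring
    have q3 : x1 - a = -(a - x1) := by ring
    have q4 : x2 - a = -(a - x2) := by ring
    have q5 : b - x0 = -(x0 - b) := by ring
    have q6 : b - x1 = -(x1 - b) := by ring
    have q7 : b - x2 = -(x2 - b) := by ring
    rw [q1, q2, q3, q4, q5, q6, q7]
    field_simp
  rw [hS0] at E
  norm_num at E
end

/-- Points that can escape to infinity without touching `C`. -/
def Esc (C : Set ℂ) : Set ℂ := {p | ∃ R : ℝ, ∀ q : ℂ, R < ‖q‖ → JoinedIn Cᶜ p q}

theorem esc_joined {C : Set ℂ} {p q : ℂ} (hp : p ∈ Esc C) (hq : q ∈ Esc C) :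
    JoinedIn Cᶜ p q := by
  obtain ⟨R, hR⟩ := hp
  obtain ⟨S, hS⟩ := hq
  have h1 : max R S < ‖((|max R S| + 1 : ℝ) : ℂ)‖ := by
    rw [Complex.norm_real, Real.norm_eq_abs, abs_of_pos (by positivity)]
    linarith [le_abs_self (max R S)]
  exact (hR _ (lt_of_le_of_lt (le_max_left _ _) h1)).trans
    (hS _ (lt_of_le_of_lt (le_max_right _ _) h1)).symm

theorem esc_of_joined {C : Set ℂ} {p q : ℂ} (h : JoinedIn Cᶜ p q) (hq : q ∈ Esc C) :
    p ∈ Esc C := by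
  obtain ⟨S, hS⟩ := hq
  exact ⟨S, fun r hr => h.trans (hS r hr)⟩

theorem esc_subset {C : Set ℂ} {p : ℂ} (hp : p ∈ Esc C) : p ∉ C :=
  (esc_joined hp hp).source_mem

theorem esc_mono {C D : Set ℂ} (h : Disjoint D (Esc C)) : Esc C ⊆ Esc D := by
  intro p hp
  have hp' := hp
  obtain ⟨R, hR⟩ := hp
  refine ⟨R, fun q hq => ?_⟩
  obtain ⟨γ, hγ⟩ := hR q hq
  refine ⟨γ, fun t => ?_⟩
  have : γ t ∈ Esc C := by
    apply esc_of_joined _ hp'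
    refine JoinedIn.symm ⟨γ.truncateOfLE (t₀ := 0) (t₁ := (t : ℝ)) t.2.1 |>.cast (by simp) (by simp), fun s => ?_⟩
    have : (γ.truncateOfLE (t₀ := 0) (t₁ := (t : ℝ)) t.2.1) s ∈ range γ := by
      apply Path.truncate_range (γ := γ) (t₀ := 0) (t₁ := t)
      exact ⟨s, rfl⟩
    obtain ⟨r, hr⟩ := this
    change (γ.truncateOfLE (t₀ := 0) (t₁ := (t : ℝ)) t.2.1) s ∈ _
    rw [← hr]; exact hγ r
  exact fun hD => (Set.disjoint_left.1 h) hD this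

theorem esc_nonempty {C : Set ℂ} (hC : IsCompact C) : (Esc C).Nonempty := by
  obtain ⟨R, hR0, hR⟩ := hC.isBounded.exists_pos_norm_le
  have hpc : IsPathConnected (Complex.exp '' {z : ℂ | Real.log R < z.re}) := by
    apply IsPathConnected.image _ Complex.continuous_exp
    apply Convex.isPathConnected (convex_halfSpace_re_gt _)
    exact ⟨((Real.log R + 1 : ℝ) : ℂ), by simp⟩
  have hmem : ∀ q : ℂ, R < ‖q‖ → q ∈ Complex.exp '' {z : ℂ | Real.log R < z.re} := by
    intro q hq
    refine ⟨Complex.log q, ?_, Complex.exp_log ?_⟩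
    · simp only [Set.mem_ofPred_eq, Complex.log_re]
      exact Real.log_lt_log hR0 hq
    · rintro rfl; simp at hq; linarith
  have hsub : Complex.exp '' {z : ℂ | Real.log R < z.re} ⊆ Cᶜ := by
    rintro _ ⟨z, hz, rfl⟩ hzC
    have h1 := hR _ hzC
    rw [Complex.norm_exp] at h1
    have := Real.exp_lt_exp.2 hz
    rw [Real.exp_log hR0] at this
    linarith
  obtain ⟨p, hp⟩ := hpc.nonempty
  exact ⟨p, R, fun q hq => (hpc.joinedIn p hp q (hmem q hq)).mono hsub⟩

theorem ball_esc {C : Set ℂ} (hC : IsClosed C) {p : ℂ} (hp : p ∉ C) :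
    ∃ ε > 0, ∀ q ∈ Metric.ball p ε, JoinedIn Cᶜ p q := by
  obtain ⟨ε, he, hb⟩ := Metric.isOpen_iff.1 hC.isOpen_compl p hp
  exact ⟨ε, he, fun q hq => ((Metric.isPathConnected_ball he).joinedIn p
    (Metric.mem_ball_self he) q hq).mono hb⟩

theorem esc_no_mutual {C D : Set ℂ} (hC : IsCompact C) (hD : IsCompact D) (hCn : C.Nonempty)
    (hCD : Disjoint C D) (h1 : Disjoint D (Esc C)) (h2 : Disjoint C (Esc D)) : False := by
  have hE : Esc C = Esc D := (esc_mono h1).antisymm (esc_mono h2)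
  have key : ∀ {C : Set ℂ}, IsClosed C → ∀ p ∈ closure (Esc C), p ∉ C → p ∈ Esc C := by
    intro C hC p hp hpC
    obtain ⟨ε, he, hb⟩ := ball_esc hC hpC
    obtain ⟨q, hq, hqd⟩ := Metric.mem_closure_iff.1 hp ε he
    exact esc_of_joined (hb q (by rwa [Metric.mem_ball, dist_comm])) hq
  have hcl : IsClosed (Esc C) := by
    apply isClosed_of_closure_subset
    intro p hp
    by_cases hpC : p ∈ C
    · rw [hE] at hp ⊢
      exact key hD.isClosed p hp (Set.disjoint_left.1 hCD hpC)
    · exact key hC.isClosed p hp hpC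
  have hop : IsOpen (Esc C) := by
    rw [Metric.isOpen_iff]
    intro p hp
    obtain ⟨ε, he, hb⟩ := ball_esc hC.isClosed (esc_subset hp)
    exact ⟨ε, he, fun q hq => esc_of_joined (hb q hq).symm hp⟩
  rcases isClopen_iff.1 ⟨hcl, hop⟩ with h | h
  · exact (esc_nonempty hC).ne_empty h
  · obtain ⟨c, hc⟩ := hCn
    exact esc_subset (h ▸ mem_univ c : c ∈ Esc C) hc

theorem esc_dich {C D : Set ℂ} (hD : IsPathConnected D) (hCD : Disjoint D C)
    (h : ¬ Disjoint D (Esc C)) : D ⊆ Esc C := by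
  obtain ⟨p, hpD, hp⟩ := Set.not_disjoint_iff.1 h
  intro q hq
  exact esc_of_joined ((hD.joinedIn q hq p hpD).mono hCD.subset_compl_right) hp

theorem chain_card (D : ℕ → Set ℂ) (M : ℕ) (P : Finset ℂ) (a : ℕ → ℂ)
    (hc : ∀ j ≤ M, IsCompact (D j)) (hp : ∀ j ≤ M, IsPathConnected (D j))
    (hd : ∀ j < M, Disjoint (D j) (D (j + 1)))
    (hs : ∀ j < M, Disjoint (D (j + 1)) (Esc (D j)))
    (ha : ∀ j ≤ M, a j ∈ D j) (haP : ∀ j ≤ M, a j ∈ P) : M + 1 ≤ P.card := by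
  have hmono : ∀ j i, j ≤ i → i ≤ M → Esc (D j) ⊆ Esc (D i) := by
    intro j i hji
    induction i, hji using Nat.le_induction with
    | base => intro _; exact subset_rfl
    | succ i _ ih => intro hi; exact (ih (by omega)).trans (esc_mono (hs i (by omega)))
  have hout : ∀ j < M, D j ⊆ Esc (D (j + 1)) := by
    intro j hj
    apply esc_dich (hp j hj.le) (hd j hj)
    intro h
    exact esc_no_mutual (hc j hj.le) (hc (j + 1) hj) ⟨a j, ha j hj.le⟩ (hd j hj) (hs j hj) h
  have hdis : ∀ j i, j < i → i ≤ M → Disjoint (D j) (D i) := by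
    intro j i hji hi
    obtain ⟨i, rfl⟩ : ∃ i', i = i' + 1 := ⟨i - 1, by omega⟩
    rcases Nat.lt_succ_iff_lt_or_eq.1 hji with h | rfl
    · exact (hs i hi).symm.mono_left ((hout j (by omega)).trans (hmono (j + 1) i h (by omega)))
    · exact hd j hi
  have : (Finset.range (M + 1)).card ≤ P.card := by
    apply Finset.card_le_card_of_injOn a
    · intro j hj
      exact haP j (by simpa [Nat.lt_succ_iff] using hj)
    · intro i hi j hj hij
      simp only [Finset.coe_range, mem_Iio, Nat.lt_succ_iff] at hi hj
      by_contra hne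
      rcases Nat.lt_or_gt_of_ne hne with h | h
      · exact Set.disjoint_left.1 (hdis i j h hj) (ha i hi) (hij ▸ ha j hj)
      · exact Set.disjoint_left.1 (hdis j i h hi) (ha j hj) (hij ▸ ha i hi)
  simpa using this

theorem seq_card (C : ℕ → Set ℂ) (h : ℕ) (P : Finset ℂ) (a : ℕ → ℂ)
    (hc : ∀ j < h, IsCompact (C j)) (hp : ∀ j < h, IsPathConnected (C j))
    (hd : ∀ j, j + 1 < h → Disjoint (C j) (C (j + 1)))
    (hs : ∀ j, j + 2 < h → ¬ (C j ⊆ Esc (C (j + 1)) ∧ C (j + 2) ⊆ Esc (C (j + 1))))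
    (ha : ∀ j < h, a j ∈ C j) (haP : ∀ j < h, a j ∈ P) : h ≤ 2 * P.card := by
  classical
  by_cases hex : ∃ j, j + 1 < h ∧ ¬ Disjoint (C j) (Esc (C (j + 1)))
  · obtain ⟨hj1, hj2⟩ := Nat.find_spec hex
    have hmin := fun m => Nat.find_min hex (m := m)
    generalize Nat.find hex = j0 at hj1 hj2 hmin
    have hrho : ∀ j < j0, Disjoint (C j) (Esc (C (j + 1))) := by
      intro j hj
      by_contra hcon
      exact hmin j hj ⟨by omega, hcon⟩
    have hsig : ∀ d, j0 + d + 1 < h → ¬ Disjoint (C (j0 + d)) (Esc (C (j0 + d + 1))) := by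
      intro d
      induction d with
      | zero => intro _; exact hj2
      | succ d ih =>
        intro hd' hcon
        have h1 := esc_dich (hp _ (by omega)) (hd (j0 + d) (by omega)) (ih (by omega))
        have h2 : Disjoint (C (j0 + d + 2)) (Esc (C (j0 + d + 1))) := by
          by_contra h3
          exact hs (j0 + d) (by omega) ⟨h1, esc_dich (hp _ (by omega))
            (hd (j0 + d + 1) (by omega)).symm h3⟩
        exact esc_no_mutual (hc _ (by omega)) (hc _ (by omega)) ⟨_, ha (j0 + d + 1) (by omega)⟩
          (hd (j0 + d + 1) (by omega)) h2 hcon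
    have hsig' : ∀ d, j0 + d + 2 < h → Disjoint (C (j0 + d + 2)) (Esc (C (j0 + d + 1))) := by
      intro d hd'
      by_contra h3
      exact hs (j0 + d) (by omega) ⟨esc_dich (hp _ (by omega)) (hd (j0 + d) (by omega))
        (hsig d (by omega)), esc_dich (hp _ (by omega)) (hd (j0 + d + 1) (by omega)).symm h3⟩
    have A := chain_card (fun j => C (j0 - j)) j0 P (fun j => a (j0 - j))
      (fun j hj => hc _ (by omega)) (fun j hj => hp _ (by omega))
      (fun j hj => by
        have := (hd (j0 - (j + 1)) (by omega)).symm
        rwa [show j0 - (j + 1) + 1 = j0 - j by omega] at this)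
      (fun j hj => by
        have := hrho (j0 - (j + 1)) (by omega)
        rwa [show j0 - (j + 1) + 1 = j0 - j by omega] at this)
      (fun j hj => ha _ (by omega)) (fun j hj => haP _ (by omega))
    have B := chain_card (fun j => C (j0 + 1 + j)) (h - 2 - j0) P (fun j => a (j0 + 1 + j))
      (fun j hj => hc _ (by omega)) (fun j hj => hp _ (by omega))
      (fun j hj => hd (j0 + 1 + j) (by omega))
      (fun j hj => by
        have := hsig' j (by omega)
        rwa [show j0 + j + 2 = j0 + 1 + (j + 1) by omega,
          show j0 + j + 1 = j0 + 1 + j by omega] at this)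
      (fun j hj => ha _ (by omega)) (fun j hj => haP _ (by omega))
    omega
  · push Not at hex
    rcases Nat.eq_zero_or_pos h with rfl | hpos
    · simp
    have A := chain_card (fun j => C (h - 1 - j)) (h - 1) P (fun j => a (h - 1 - j))
      (fun j hj => hc _ (by omega)) (fun j hj => hp _ (by omega))
      (fun j hj => by
        have := (hd (h - 1 - (j + 1)) (by omega)).symm
        rwa [show h - 1 - (j + 1) + 1 = h - 1 - j by omega] at this)
      (fun j hj => by
        have := hex (h - 1 - (j + 1)) (by omega)
        rwa [show h - 1 - (j + 1) + 1 = h - 1 - j by omega] at this)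
      (fun j hj => ha _ (by omega)) (fun j hj => haP _ (by omega))
    omega

/-- Identification of the plane with `ℂ`. -/
noncomputable def toC (p : Pt) : ℂ := Complex.equivRealProdCLM.symm p

theorem toC_continuous : Continuous toC := Complex.equivRealProdCLM.symm.continuous

theorem toC_injective : Function.Injective toC := Complex.equivRealProdCLM.symm.injective

theorem adj_of {h : ℕ} {u v : Fin (3 * h)} (huv : u.val < v.val)
    (hadj : u.val / 3 = v.val / 3 ∨ u.val + 3 = v.val) : (nestedTriangles h).Adj u v := by
  unfold nestedTriangles
  rw [SimpleGraph.fromRel_adj]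
  exact ⟨fun e => by rw [e] at huv; omega, Or.inl hadj⟩

theorem pos_glue {n ω : ℕ} {G : SimpleGraph (Fin n)} {P : Set Pt} (R : Realization n ω G P)
    (v : Fin n) (d : ℕ) (hn : v.val + 1 + d ≤ n) (hd : d + 1 ≤ ω) :
    (R.Γ (v.val + 1 + d)).pos v = (R.Γ (v.val + 1)).pos v := by
  induction d with
  | zero => rfl
  | succ d ih =>
    rw [← ih (by omega) (by omega)]
    have := R.pos_eq (v.val + 1 + (d + 1)) (by omega) hn v
      ⟨⟨by omega, by omega⟩, ⟨by omega, by omega⟩⟩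
    rw [this]; rfl

theorem curve_glue {n ω : ℕ} {G : SimpleGraph (Fin n)} {P : Set Pt} (R : Realization n ω G P)
    (u v : Fin n) (huv : u.val < v.val) (hadj : G.Adj u v) (d : ℕ) (hn : v.val + 1 + d ≤ n)
    (hd : v.val + d + 1 ≤ u.val + ω) :
    (R.Γ (v.val + 1 + d)).curve u v = (R.Γ (v.val + 1)).curve u v := by
  induction d with
  | zero => rfl
  | succ d ih =>
    rw [← ih (by omega) (by omega)]
    have := R.curve_eq (v.val + 1 + (d + 1)) (by omega) hn u
      ⟨⟨by omega, by omega⟩, ⟨by omega, by omega⟩⟩ v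
      ⟨⟨by omega, by omega⟩, ⟨by omega, by omega⟩⟩ hadj
    rw [this]; rfl

theorem body_disjoint {n : ℕ} {G : SimpleGraph (Fin n)} {S : Set (Fin n)} {P : Set Pt}
    {D : RawDrawing n} (hD : IsPlanarDrawingOn n G S P D) {u v x y : Fin n}
    (hu : u ∈ S) (hv : v ∈ S) (hx : x ∈ S) (hy : y ∈ S) (huv : G.Adj u v) (hxy : G.Adj x y)
    (h1 : u ≠ x) (h2 : u ≠ y) (h3 : v ≠ x) (h4 : v ≠ y) :
    Disjoint (arcBody (D.curve u v)) (arcBody (D.curve x y)) := by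
  have dec : ∀ u ∈ S, ∀ v ∈ S, G.Adj u v → ∀ p ∈ arcBody (D.curve u v),
      p = D.pos u ∨ p = D.pos v ∨ p ∈ arcInterior (D.curve u v) := by
    rintro u hu v hv huv p ⟨t, ht, rfl⟩
    obtain ⟨-, -, a0, a1⟩ := hD.arc u hu v hv huv
    rcases eq_or_lt_of_le ht.1 with h0 | h0
    · left; rw [← h0, a0]
    rcases eq_or_lt_of_le ht.2 with h1 | h1
    · right; left; rw [h1, a1]
    · right; right; exact ⟨t, ⟨h0, h1⟩, rfl⟩
  rw [Set.disjoint_left]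
  intro p hp hq
  have voff := fun w hw => hD.vertex_off_arc u hu v hv huv w hw
  have voff' := fun w hw => hD.vertex_off_arc x hx y hy hxy w hw
  rcases dec u hu v hv huv p hp with e | e | e <;>
    rcases dec x hx y hy hxy p hq with f | f | f
  · exact h1 (hD.pos_inj hu hx (e.symm.trans f))
  · exact h2 (hD.pos_inj hu hy (e.symm.trans f))
  · exact voff' u hu (e ▸ f)
  · exact h3 (hD.pos_inj hv hx (e.symm.trans f))
  · exact h4 (hD.pos_inj hv hy (e.symm.trans f))
  · exact voff' v hv (e ▸ f)
  · exact voff x hx (f ▸ e)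
  · exact voff y hy (f ▸ e)
  · have := hD.no_cross u hu v hv x hx y hy huv hxy (by
      intro hs
      rcases Sym2.eq_iff.1 hs with ⟨h, -⟩ | ⟨h, -⟩
      · exact h1 h
      · exact h2 h)
    exact (Set.eq_empty_iff_forall_notMem.1 this p) ⟨e, f⟩

theorem extract {h : ℕ} {P : Set Pt} (R : Realization (3 * h) 9 (nestedTriangles h) P) :
    ∃ (z : ℕ → ℂ) (B : ℕ → ℕ → Set ℂ),
      (∀ u, u < 3 * h → ∃ p ∈ P, z u = toC p) ∧
      (∀ u v, u < v → v < 3 * h → (u / 3 = v / 3 ∨ u + 3 = v) →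
        ∃ γ : Path (z u) (z v), range γ = B u v) ∧
      (∀ i ≤ 3 * h, ∀ u v x y, u < v → x < y → v < i → y < i → i ≤ u + 9 → i ≤ x + 9 →
        (u / 3 = v / 3 ∨ u + 3 = v) → (x / 3 = y / 3 ∨ x + 3 = y) →
        u ≠ x → u ≠ y → v ≠ x → v ≠ y → Disjoint (B u v) (B x y)) := by
  classical
  refine ⟨fun u => if hu : u < 3 * h then toC ((R.Γ (u + 1)).pos ⟨u, hu⟩) else 0,
    fun u v => if huv : u < 3 * h ∧ v < 3 * h then
      toC '' arcBody ((R.Γ (v + 1)).curve ⟨u, huv.1⟩ ⟨v, huv.2⟩) else ∅, ?_, ?_, ?_⟩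
  · intro u hu
    refine ⟨(R.Γ (u + 1)).pos ⟨u, hu⟩,
      (R.planar (u + 1) (by omega) (by omega)).pos_mem _ ⟨le_rfl, ?_⟩, by simp [hu]⟩
    change u + 1 ≤ u + 9
    omega
  · intro u v huv hv hadj
    have hu : u < 3 * h := by omega
    have hA := adj_of (u := ⟨u, hu⟩) (v := ⟨v, hv⟩) huv hadj
    obtain ⟨c1, -, c3, c4⟩ := (R.planar (v + 1) (by omega) (by omega)).arc ⟨u, hu⟩
      ⟨by simp only; omega, by simp only; omega⟩ ⟨v, hv⟩
      ⟨by simp only; omega, by simp only; omega⟩ hA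
    have hpu : (R.Γ (v + 1)).pos ⟨u, hu⟩ = (R.Γ (u + 1)).pos ⟨u, hu⟩ := by
      have := pos_glue R ⟨u, hu⟩ (v - u) (by simp only; omega) (by omega)
      simp only at this
      rwa [show u + 1 + (v - u) = v + 1 by omega] at this
    simp only [hu, hv, dif_pos, and_self]
    refine ⟨⟨⟨fun t => toC ((R.Γ (v + 1)).curve ⟨u, hu⟩ ⟨v, hv⟩ t), ?_⟩, ?_, ?_⟩, ?_⟩
    · exact toC_continuous.comp (c1.domRestrict)
    · simp [c3, hpu]
    · simp [c4]
    · ext w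
      constructor
      · rintro ⟨t, rfl⟩
        exact ⟨_, ⟨t, t.2, rfl⟩, rfl⟩
      · rintro ⟨_, ⟨t, ht, rfl⟩, rfl⟩
        exact ⟨⟨t, ht⟩, rfl⟩
  · intro i hi u v x y huv hxy hv hy hu9 hx9 hadj hadj' h1 h2 h3 h4
    have hu' : u < 3 * h := by omega
    have hv' : v < 3 * h := by omega
    have hx' : x < 3 * h := by omega
    have hy' : y < 3 * h := by omega
    simp only [hu', hv', hx', hy', dif_pos, and_self]
    rw [Set.disjoint_image_iff toC_injective]
    have hA := adj_of (u := ⟨u, hu'⟩) (v := ⟨v, hv'⟩) huv hadj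
    have hA' := adj_of (u := ⟨x, hx'⟩) (v := ⟨y, hy'⟩) hxy hadj'
    have e1 := curve_glue R ⟨u, hu'⟩ ⟨v, hv'⟩ huv hA (i - (v + 1)) (by simp only; omega)
      (by simp only; omega)
    have e2 := curve_glue R ⟨x, hx'⟩ ⟨y, hy'⟩ hxy hA' (i - (y + 1)) (by simp only; omega)
      (by simp only; omega)
    simp only at e1 e2
    rw [show v + 1 + (i - (v + 1)) = i by omega] at e1
    rw [show y + 1 + (i - (y + 1)) = i by omega] at e2
    rw [← e1, ← e2]
    apply body_disjoint (R.planar i (by omega) hi) _ _ _ _ hA hA'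
    any_goals (simp only [ne_eq, Fin.mk.injEq]; assumption)
    all_goals exact ⟨by simp only; omega, by simp only; omega⟩

theorem bound {h : ℕ} {P : Finset Pt}
    (R : Realization (3 * h) 9 (nestedTriangles h) (P : Set Pt)) : h ≤ 2 * P.card := by
  classical
  obtain ⟨z, B, hz, hB, hdis⟩ := extract R
  have hB' : ∀ u v, ∃ γ : Path (z u) (z v), u < v → v < 3 * h →
      (u / 3 = v / 3 ∨ u + 3 = v) → range γ = B u v := by
    intro u v
    by_cases hc : u < v ∧ v < 3 * h ∧ (u / 3 = v / 3 ∨ u + 3 = v)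
    · obtain ⟨γ, hγ⟩ := hB u v hc.1 hc.2.1 hc.2.2
      exact ⟨γ, fun _ _ _ => hγ⟩
    · exact ⟨PathConnectedSpace.somePath _ _, fun h1 h2 h3 => absurd ⟨h1, h2, h3⟩ hc⟩
  choose γ hγ using hB'
  have hQ : (P.image toC).card ≤ P.card := Finset.card_image_le
  let C : ℕ → Set ℂ := fun m => B (3 * m + 1) (3 * m + 2) ∪ B (3 * m) (3 * m + 2) ∪
    B (3 * m) (3 * m + 1)
  have hzB : ∀ u v, u < v → v < 3 * h → (u / 3 = v / 3 ∨ u + 3 = v) →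
      z u ∈ B u v ∧ z v ∈ B u v := by
    intro u v h1 h2 h3
    rw [← hγ u v h1 h2 h3]
    exact ⟨Path.source_mem_range _, Path.target_mem_range _⟩
  have hcp : ∀ u v, u < v → v < 3 * h → (u / 3 = v / 3 ∨ u + 3 = v) →
      IsCompact (B u v) ∧ IsPathConnected (B u v) := by
    intro u v h1 h2 h3
    rw [← hγ u v h1 h2 h3]
    haveI : PathConnectedSpace unitInterval := isPathConnected_iff_pathConnectedSpace.mp
      ((convex_Icc (0 : ℝ) 1).isPathConnected ⟨0, by simp⟩)
    exact ⟨isCompact_range (γ u v).continuous, isPathConnected_range (γ u v).continuous⟩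
  have hdC : ∀ j, j + 1 < h → Disjoint (C j) (C (j + 1)) := by
    intro j hj
    simp only [C, Set.disjoint_union_left, Set.disjoint_union_right]
    refine ⟨⟨⟨⟨?_, ?_⟩, ?_⟩, ⟨?_, ?_⟩, ?_⟩, ⟨?_, ?_⟩, ?_⟩ <;>
      (apply hdis (3 * j + 6) <;> omega)
  have hmain : h ≤ 2 * (P.image toC).card := by
    apply seq_card C h (P.image toC) (fun m => z (3 * m))
    · intro j hj
      exact ((hcp _ _ (by omega) (by omega) (by omega)).1.union
        (hcp _ _ (by omega) (by omega) (by omega)).1).union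
        (hcp _ _ (by omega) (by omega) (by omega)).1
    · intro j hj
      refine ((hcp _ _ (by omega) (by omega) (by omega)).2.union
        (hcp _ _ (by omega) (by omega) (by omega)).2 ⟨z (3 * j + 2), ?_, ?_⟩).union
        (hcp _ _ (by omega) (by omega) (by omega)).2 ⟨z (3 * j), ?_, ?_⟩
      · exact (hzB _ _ (by omega) (by omega) (by omega)).2
      · exact (hzB _ _ (by omega) (by omega) (by omega)).2
      · exact Or.inr (hzB _ _ (by omega) (by omega) (by omega)).1
      · exact (hzB _ _ (by omega) (by omega) (by omega)).1
    · exact hdC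
    · rintro m hm ⟨hin, hout⟩
      have ha : z (3 * m) ∈ C m :=
        Or.inr (hzB _ _ (by omega) (by omega) (by omega)).1
      have hb : z (3 * m + 6) ∈ C (m + 2) :=
        Or.inr (hzB _ _ (by omega) (by omega) (by omega)).1
      have hj := esc_joined (hin ha) (hout hb)
      have hcore := core (γ (3 * m) (3 * m + 3))
        ((γ (3 * m) (3 * m + 1)).trans (γ (3 * m + 1) (3 * m + 4)))
        ((γ (3 * m) (3 * m + 2)).trans (γ (3 * m + 2) (3 * m + 5)))
        (γ (3 * m + 3) (3 * m + 6))
        ((γ (3 * m + 4) (3 * m + 7)).trans (γ (3 * m + 6) (3 * m + 7)).symm)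
        ((γ (3 * m + 5) (3 * m + 8)).trans (γ (3 * m + 6) (3 * m + 8)).symm)
        (γ (3 * m + 4) (3 * m + 5)) (γ (3 * m + 3) (3 * m + 5)).symm
        (γ (3 * m + 3) (3 * m + 4))
      simp only [Path.trans_range, Path.symm_range] at hcore
      rw [hγ (3 * m) (3 * m + 3) (by omega) (by omega) (by omega),
        hγ (3 * m) (3 * m + 1) (by omega) (by omega) (by omega),
        hγ (3 * m + 1) (3 * m + 4) (by omega) (by omega) (by omega),
        hγ (3 * m) (3 * m + 2) (by omega) (by omega) (by omega),
        hγ (3 * m + 2) (3 * m + 5) (by omega) (by omega) (by omega),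
        hγ (3 * m + 3) (3 * m + 6) (by omega) (by omega) (by omega),
        hγ (3 * m + 4) (3 * m + 7) (by omega) (by omega) (by omega),
        hγ (3 * m + 6) (3 * m + 7) (by omega) (by omega) (by omega),
        hγ (3 * m + 5) (3 * m + 8) (by omega) (by omega) (by omega),
        hγ (3 * m + 6) (3 * m + 8) (by omega) (by omega) (by omega),
        hγ (3 * m + 4) (3 * m + 5) (by omega) (by omega) (by omega),
        hγ (3 * m + 3) (3 * m + 5) (by omega) (by omega) (by omega),
        hγ (3 * m + 3) (3 * m + 4) (by omega) (by omega) (by omega)] at hcore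
      simp only [Set.disjoint_union_left, Set.disjoint_union_right] at hcore
      apply hcore _ _ _ _ _ _ _ _ _ _ _ _ hj
      all_goals (try refine ⟨?_, ?_⟩)
      all_goals (try refine ⟨?_, ?_⟩)
      all_goals (apply hdis (3 * m + 9) <;> omega)
    · intro j hj
      exact Or.inr (hzB _ _ (by omega) (by omega) (by omega)).1
    · intro j hj
      obtain ⟨p, hp, he⟩ := hz (3 * j) (by omega)
      exact Finset.mem_image.2 ⟨p, hp, he.symm⟩
  omega

/-- **Theorem 8.** Let `S = (G, 9, k, τ)` be a realizable graph
story where `G` is the nested triangles graph on `n = 3h` vertices and `τ` is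
given by the indices of the vertices.  Then `k ∈ Ω(n)`: there is a constant
`c > 0` such that `n ≤ c * (k + 1)` whenever such a story is realizable. -/
theorem nested_triangles_needs_linearly_many_extra_points :
    ∃ c : ℕ, 0 < c ∧
      ∀ h k : ℕ, 3 ≤ h →
        Realizable (3 * h) 9 k (nestedTriangles h) → 3 * h ≤ c * (k + 1) := by
  refine ⟨54, by norm_num, ?_⟩
  rintro h k - ⟨P, hP, ⟨R⟩⟩
  have := bound R
  omega

end GraphStories
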